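/- Let n ≥ 1, m ≥ 1, let D and A be n×n real matrices, let B be an n×m real matrix, and let (λ_i)_{i∈ℕ} be a strictly increasing sequence of positive real numbers tending to +∞ such that rank [λ_i·D − A | B] = n for every i. Writing K_i = [λ_i·D − A | B], there exists a constant c₁ > 0 such that det(K_i · K_iᵀ) ≥ c₁ for all i. -/

import Mathlib

open Matrix

/-- The Kalman matrix `[M|B] = (M^{n-1}B | M^{n-2}B | ⋯ | MB | B)`. -/
def kalman {n m : ℕ} (M : Matrix (Fin n) (Fin n) ℝ) (B : Matrix (Fin n) (Fin m) ℝ) :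
    Matrix (Fin n) (Fin n × Fin m) ℝ :=
  fun i p => (M ^ (n - 1 - (p.1 : ℕ)) * B) i p.2

/- With `K` the Kalman matrix of `(t D - A, B)`, the function `t ↦ det (K Kᵀ)` is a polynomial. A
real polynomial is a closed map, being either constant or proper. It sends a closed set on which it
does not vanish to a closed set missing `0`, hence at positive distance from `0`. A sequence tending
to `+∞` has closed range, and full rank of the Kalman matrix makes its Gram determinant positive. -/

open Polynomial Filter

section Gram

variable {ι κ R : Type*} [Fintype ι] [Fintype κ] [Field R] [PartialOrder R] [StarRing R]
  [StarOrderedRing R]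

theorem posDef_self_mul_conjTranspose_of_rank_eq_card {K : Matrix ι κ R}
    (hK : K.rank = Fintype.card ι) : (K * Kᴴ).PosDef := by
  have hrow : LinearIndependent R K.row := by
    rw [linearIndependent_iff_card_eq_finrank_span, Set.finrank, ← K.rank_eq_finrank_span_row, hK]
  exact .mul_conjTranspose_self K (vecMul_injective_iff.mpr hrow)

end Gram

section KalmanMatrix

variable {R S : Type*} {n m : ℕ}

/-- The Kalman matrix `(M^{n-1}B | ⋯ | MB | B)` over an arbitrary semiring. Its instance over `ℝ` is
`kalman`; over `R[X]` it applies to the pencil `X • D - A`. -/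
def kalmanMatrix [Semiring R] (M : Matrix (Fin n) (Fin n) R) (B : Matrix (Fin n) (Fin m) R) :
    Matrix (Fin n) (Fin n × Fin m) R :=
  of fun i p => (M ^ (n - 1 - (p.1 : ℕ)) * B) i p.2

theorem kalman_eq_kalmanMatrix (M : Matrix (Fin n) (Fin n) ℝ) (B : Matrix (Fin n) (Fin m) ℝ) :
    kalman M B = kalmanMatrix M B :=
  rfl

theorem kalmanMatrix_map [Semiring R] [Semiring S] (f : R →+* S) (M : Matrix (Fin n) (Fin n) R)
    (B : Matrix (Fin n) (Fin m) R) :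
    (kalmanMatrix M B).map f = kalmanMatrix (M.map f) (B.map f) := by
  ext i p
  simp only [kalmanMatrix, map_apply, of_apply, ← Matrix.map_pow, ← Matrix.map_mul]

end KalmanMatrix

section Pencil

variable {R ι κ : Type*} [CommRing R] {n m : ℕ}

/-- The matrix pencil `X • D - A`, as a matrix of polynomials. -/
noncomputable def matrixPencil (D A : Matrix ι κ R) : Matrix ι κ R[X] :=
  (X : R[X]) • D.map C - A.map C

theorem matrixPencil_map_evalRingHom (D A : Matrix ι κ R) (t : R) :
    (matrixPencil D A).map (evalRingHom t) = t • D - A := by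
  ext i j
  simpa [matrixPencil] using mul_comm (D i j) t

/-- The Gram determinant `det (K Kᵀ)` of the Kalman matrix `K` of `(t • D - A, B)`, as a polynomial
in `t`. -/
noncomputable def kalmanGramDet (D A : Matrix (Fin n) (Fin n) R) (B : Matrix (Fin n) (Fin m) R) :
    R[X] :=
  (kalmanMatrix (matrixPencil D A) (B.map C) * (kalmanMatrix (matrixPencil D A) (B.map C))ᵀ).det

theorem eval_kalmanGramDet (D A : Matrix (Fin n) (Fin n) R) (B : Matrix (Fin n) (Fin m) R) (t : R) :
    (kalmanGramDet D A B).eval t =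
      (kalmanMatrix (t • D - A) B * (kalmanMatrix (t • D - A) B)ᵀ).det := by
  have hB : (B.map C).map (evalRingHom t) = B := by
    ext i j
    simp
  have hK : (kalmanMatrix (matrixPencil D A) (B.map C)).map (evalRingHom t) =
      kalmanMatrix (t • D - A) B := by
    rw [kalmanMatrix_map, matrixPencil_map_evalRingHom, hB]
  rw [kalmanGramDet, ← coe_evalRingHom, RingHom.map_det, RingHom.mapMatrix_apply, Matrix.map_mul,
    transpose_map, hK]

end Pencil

theorem exists_pos_forall_mem_le_norm_eval {𝕜 : Type*} [NormedField 𝕜] [ProperSpace 𝕜]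
    {p : 𝕜[X]} {s : Set 𝕜} (hs : IsClosed s) (hp : ∀ x ∈ s, p.eval x ≠ 0) :
    ∃ c > (0 : ℝ), ∀ x ∈ s, c ≤ ‖p.eval x‖ := by
  have hclosed : IsClosed (p.eval '' s) := p.isClosedMap_eval s hs
  have hzero : (0 : 𝕜) ∈ (p.eval '' s)ᶜ := fun ⟨x, hx, hpx⟩ => hp x hx hpx
  obtain ⟨c, hc, hball⟩ := Metric.isOpen_iff.mp hclosed.isOpen_compl 0 hzero
  refine ⟨c, hc, fun x hx => not_lt.mp fun hlt => ?_⟩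
  exact hball (mem_ball_zero_iff.mpr hlt) (Set.mem_image_of_mem _ hx)

theorem isClosed_range_of_tendsto_cofinite_cocompact {ι Y : Type*} [TopologicalSpace Y] [T2Space Y]
    [CompactlyCoherentSpace Y] {f : ι → Y} (hf : Tendsto f cofinite (cocompact Y)) :
    IsClosed (Set.range f) := by
  let _ : TopologicalSpace ι := ⊥
  have : DiscreteTopology ι := ⟨rfl⟩
  have hproper : IsProperMap f := isProperMap_iff_tendsto_cocompact.mpr
    ⟨continuous_of_discreteTopology, by rwa [cocompact_eq_cofinite]⟩
  exact hproper.isClosed_range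

theorem stmt2_general {n m : ℕ} (D A : Matrix (Fin n) (Fin n) ℝ) (B : Matrix (Fin n) (Fin m) ℝ)
    {s : Set ℝ} (hs : IsClosed s) (hrank : ∀ t ∈ s, (kalman (t • D - A) B).rank = n) :
    ∃ c > (0 : ℝ), ∀ t ∈ s, c ≤ (kalman (t • D - A) B * (kalman (t • D - A) B)ᵀ).det := by
  have heval (t : ℝ) : (kalmanGramDet D A B).eval t =
      (kalman (t • D - A) B * (kalman (t • D - A) B)ᵀ).det := by
    rw [eval_kalmanGramDet, kalman_eq_kalmanMatrix]
  have hpos : ∀ t ∈ s, 0 < (kalmanGramDet D A B).eval t := fun t ht => by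
    rw [heval, ← conjTranspose_eq_transpose_of_trivial]
    exact (posDef_self_mul_conjTranspose_of_rank_eq_card (by simpa using hrank t ht)).det_pos
  obtain ⟨c, hc, hle⟩ := exists_pos_forall_mem_le_norm_eval hs fun t ht => (hpos t ht).ne'
  refine ⟨c, hc, fun t ht => ?_⟩
  rw [← heval, ← Real.norm_of_nonneg (hpos t ht).le]
  exact hle t ht

theorem stmt2 {n m : ℕ} (hn : 1 ≤ n) (hm : 1 ≤ m)
    (D A : Matrix (Fin n) (Fin n) ℝ) (B : Matrix (Fin n) (Fin m) ℝ)
    (lam : ℕ → ℝ) (hpos : ∀ i, 0 < lam i) (hmono : StrictMono lam)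
    (htend : Filter.Tendsto lam Filter.atTop Filter.atTop)
    (hrank : ∀ i, (kalman (lam i • D - A) B).rank = n) :
    ∃ c₁ > (0 : ℝ), ∀ i : ℕ,
      c₁ ≤ (kalman (lam i • D - A) B * (kalman (lam i • D - A) B)ᵀ).det := by
  have hclosed : IsClosed (Set.range lam) := isClosed_range_of_tendsto_cofinite_cocompact
    (Nat.cofinite_eq_atTop ▸ htend.mono_right atTop_le_cocompact)
  simpa only [Set.forall_mem_range] using
    stmt2_general D A B hclosed (Set.forall_mem_range.mpr hrank)
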